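/- arXiv:1603.02212 — 2 statements merged into one kernel-verified Lean document; each statement's English description precedes it below -/
import Mathlib

section
/- (Skorokhod's lemma on a unique probability space and convergence.) Let ξ^n (n = 0,1,2,…) be ℝ^d-valued stochastic processes on [0,∞), defined on a common probability space, such that (i) for every T > 0, lim_{c→∞} sup_n sup_{t ≤ T} P(|ξ^n_t| > c) = 0, and (ii) for every T > 0 and ε > 0, lim_{h↓0} sup_n sup_{s,t ≤ T, |t−s| ≤ h} P(|ξ^n_t − ξ^n_s| > ε) = 0. Then there exist a subsequence n' → ∞, a probability space (Ω̃, F̃, P̃), and processes ξ̃^{n'} and ξ̃ on it such that for every n' all finite-dimensional distributions of ξ̃^{n'} coincide with those of ξ^{n'}, and for every ε > 0 and every t ≥ 0, P̃(|ξ̃^{n'}_t − ξ̃_t| > ε) → 0 as n' → ∞. -/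
open MeasureTheory Filter

/-!
Restrict the processes to a countable dense set `D` of times. Their laws on the Polish space `D → E`
are tight, so it is enough to represent a subsequence of a tight sequence of laws by almost surely
convergent random variables. A Polish space embeds measurably in the Hilbert cube, which is a
continuous image of `[0, 1]`; laws on the cube thus lift to laws on `[0, 1]`, whose quantile
functions are monotone and, by Helly's selection theorem, converge along a subsequence off a
countable set. Tightness ensures that the limits stay in the Polish space.

Continuity in probability makes each value `ξ^n_t` almost surely a measurable function of the
restriction of `ξ^n` to `D`, so the whole processes can be rebuilt from their copies on `D`.
Equicontinuity in probability then carries the Cauchy property in probability from `D` to all times.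
-/

open ProbabilityTheory Set Topology unitInterval
open scoped ENNReal NNReal

section Quantile

variable {α : Type*} [CompleteLinearOrder α] [MeasurableSpace α]

/-- The quantile function of a probability measure `ν` on a complete linear order, that is, the
generalised inverse of its distribution function `x ↦ ν (Iic x)`. It is defined on the unit
interval, where it transports Lebesgue measure to `ν`. -/
noncomputable def quantile (ν : Measure α) (u : I) : α :=
  sInf {x | ENNReal.ofReal u ≤ ν (Iic x)}

lemma monotone_quantile (ν : Measure α) : Monotone (quantile ν) := fun _ _ huv =>
  sInf_le_sInf fun _ hx => (ENNReal.ofReal_le_ofReal huv).trans hx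

variable [TopologicalSpace α] [OrderTopology α] [SecondCountableTopology α] [BorelSpace α]

lemma quantile_le_iff (ν : Measure α) [IsProbabilityMeasure ν] {u : I} {x : α} :
    quantile ν u ≤ x ↔ ENNReal.ofReal u ≤ ν (Iic x) := by
  refine ⟨fun h => ?_, fun h => sInf_le h⟩
  suffices ENNReal.ofReal u ≤ ν (Iic (quantile ν u)) from
    this.trans (measure_mono (Iic_subset_Iic.2 h))
  have hne : {x | ENNReal.ofReal u ≤ ν (Iic x)}.Nonempty :=
    ⟨⊤, by simpa using ENNReal.ofReal_le_one.2 u.2.2⟩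
  obtain ⟨y, hy, hle, hlim, hyu⟩ :=
    (isGLB_sInf {x | ENNReal.ofReal u ≤ ν (Iic x)}).exists_seq_antitone_tendsto hne
  have hInter : ⋂ n, Iic (y n) = Iic (quantile ν u) := by
    ext z
    simp only [mem_iInter, mem_Iic]
    exact ⟨fun hz => ge_of_tendsto' hlim hz, fun hz n => hz.trans (hle n)⟩
  have hcont := tendsto_measure_iInter_atTop (μ := ν)
    (fun n => (measurableSet_Iic (a := y n)).nullMeasurableSet)
    (fun _ _ hmn => Iic_subset_Iic.2 (hy hmn)) ⟨0, measure_ne_top _ _⟩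
  rw [hInter] at hcont
  exact ge_of_tendsto' hcont hyu

lemma measurePreserving_quantile (ν : Measure α) [IsProbabilityMeasure ν] :
    MeasurePreserving (quantile ν) volume ν := by
  have hmeas : Measurable (quantile ν) := (monotone_quantile ν).measurable
  have := Measure.isProbabilityMeasure_map (μ := (volume : Measure I)) hmeas.aemeasurable
  refine ⟨hmeas, Measure.ext_of_Iic _ _ fun x => ?_⟩
  have hpre : quantile ν ⁻¹' Iic x =
      Iic ⟨ν.real (Iic x), measureReal_nonneg, measureReal_le_one⟩ := by
    ext u
    rw [mem_preimage, mem_Iic, quantile_le_iff, mem_Iic, ← Subtype.coe_le_coe,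
      ← ofReal_measureReal, ENNReal.ofReal_le_ofReal_iff measureReal_nonneg]
  rw [Measure.map_apply hmeas measurableSet_Iic, hpre, volume_Iic, ofReal_measureReal]

end Quantile

theorem helly_selection {α β : Type*} [LinearOrder α] [TopologicalSpace α] [OrderTopology α]
    [DenselyOrdered α] [TopologicalSpace.SeparableSpace α] [CompleteLinearOrder β]
    [TopologicalSpace β] [OrderTopology β] [SecondCountableTopology β] {f : ℕ → α → β}
    (hf : ∀ n, Monotone (f n)) :
    ∃ φ : ℕ → ℕ, StrictMono φ ∧
      {u | ¬ ∃ y, Tendsto (fun n => f (φ n) u) atTop (𝓝 y)}.Countable := by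
  obtain ⟨D, hDc, hD⟩ := TopologicalSpace.exists_countable_dense α
  have := hDc.to_subtype
  obtain ⟨G, φ, hφ, hG⟩ := CompactSpace.tendsto_subseq fun n (q : D) => f n q
  have hGq (q : D) : Tendsto (fun n => f (φ n) q) atTop (𝓝 (G q)) := tendsto_pi_nhds.1 hG q
  let L : α → β := fun u => liminf (fun n => f (φ n) u) atTop
  have hL : Monotone L := fun u v huv => liminf_le_liminf (.of_forall fun n => hf _ huv)
  have hlimsup {u v : α} (huv : u < v) : limsup (fun n => f (φ n) u) atTop ≤ L v := by
    obtain ⟨q, hq, huq, hqv⟩ := hD.exists_between huv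
    calc limsup (fun n => f (φ n) u) atTop
        ≤ limsup (fun n => f (φ n) q) atTop := limsup_le_limsup (.of_forall fun n => hf _ huq.le)
      _ = L q := (hGq ⟨q, hq⟩).limsup_eq.trans (hGq ⟨q, hq⟩).liminf_eq.symm
      _ ≤ L v := hL hqv.le
  refine ⟨φ, hφ, (hL.countable_not_continuousAt.union
    (subsingleton_isTop α).countable).mono fun u hu => ?_⟩
  by_contra hgood
  obtain ⟨hcont, htop⟩ : ContinuousAt L u ∧ ¬ IsTop u := by simpa using hgood
  obtain ⟨v, huv⟩ : ∃ v, u < v := by simpa [IsTop] using htop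
  have : (𝓝[>] u).NeBot := nhdsGT_neBot_of_exists_gt ⟨v, huv⟩
  have hlimsup_right : ∀ᶠ w in 𝓝[>] u, limsup (fun n => f (φ n) u) atTop ≤ L w :=
    eventually_mem_nhdsWithin.mono fun _ => hlimsup
  exact hu ⟨L u, tendsto_of_le_liminf_of_limsup_le le_rfl <|
    ge_of_tendsto (hcont.tendsto.mono_left nhdsWithin_le_nhds) hlimsup_right⟩

lemma exists_continuous_surjective_unitInterval_hilbertCube :
    ∃ π : I → ℕ → I, Continuous π ∧ Function.Surjective π := by
  let e := cantorSetHomeomorphNatToBool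
  obtain ⟨γ, hγ⟩ := ContinuousMap.exists_restrict_eq isClosed_cantorSet
    ⟨cantorToHilbert ∘ e, cantorToHilbert_continuous.comp e.continuous⟩
  refine ⟨fun u => γ u, by fun_prop, fun y => ?_⟩
  obtain ⟨x, rfl⟩ := (cantorToHilbert_surjective.comp e.surjective) y
  exact ⟨⟨x, cantorSet_subset_unitInterval x.2⟩, DFunLike.congr_fun hγ x⟩

lemma exists_measurable_rightInverse {α X : Type*} [LinearOrder α] [TopologicalSpace α]
    [OrderTopology α] [CompactSpace α] [SecondCountableTopology α] [MeasurableSpace α]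
    [BorelSpace α] [TopologicalSpace X] [T2Space X] [MeasurableSpace X] [OpensMeasurableSpace X]
    {π : α → X} (hπ : Continuous π) (hsurj : Function.Surjective π) :
    ∃ r : X → α, Measurable r ∧ Function.RightInverse r π := by
  have hcpt (x : X) : IsCompact (π ⁻¹' {x}) := (isClosed_singleton.preimage hπ).isCompact
  choose r hr using fun x => (hcpt x).exists_isLeast (hsurj x)
  refine ⟨r, measurable_of_Iic fun a => ?_, fun x => (hr x).1⟩
  have hpre : r ⁻¹' Iic a = π '' Iic a := by
    ext x
    exact ⟨fun hx => ⟨r x, hx, (hr x).1⟩, fun ⟨b, hb, hbx⟩ => ((hr x).2 hbx).trans hb⟩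
  rw [hpre]
  exact (isClosed_Iic.isCompact.image hπ).isClosed.measurableSet

theorem exists_measurePreserving_ae_tendsto_hilbertCube (μ : ℕ → Measure (ℕ → I))
    [∀ n, IsProbabilityMeasure (μ n)] :
    ∃ φ : ℕ → ℕ, StrictMono φ ∧ ∃ Y : ℕ → I → ℕ → I,
      (∀ n, MeasurePreserving (Y n) volume (μ (φ n))) ∧
      ∀ᵐ u, ∃ y, Tendsto (fun n => Y n u) atTop (𝓝 y) := by
  obtain ⟨π, hπ, hsurj⟩ := exists_continuous_surjective_unitInterval_hilbertCube
  obtain ⟨r, hr, hπr⟩ := exists_measurable_rightInverse hπ hsurj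
  have hprob (n : ℕ) : IsProbabilityMeasure ((μ n).map r) :=
    Measure.isProbabilityMeasure_map hr.aemeasurable
  obtain ⟨φ, hφ, hconv⟩ := helly_selection fun n => monotone_quantile ((μ n).map r)
  have hdecode (n : ℕ) : MeasurePreserving π ((μ n).map r) (μ n) :=
    ⟨hπ.measurable, by rw [Measure.map_map hπ.measurable hr, hπr.id, Measure.map_id]⟩
  refine ⟨φ, hφ, fun n => π ∘ quantile ((μ (φ n)).map r),
    fun n => (hdecode _).comp (measurePreserving_quantile _), ?_⟩
  filter_upwards [hconv.ae_notMem volume] with u hu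
  obtain ⟨y, hy⟩ := not_not.1 hu
  exact ⟨π y, (hπ.tendsto y).comp hy⟩

lemma measure_setOf_eventually_mem_le {Ω : Type*} [MeasurableSpace Ω] {μ : Measure Ω}
    {s : ℕ → Set Ω} {ε : ℝ≥0∞} (hs : ∀ n, μ (s n) ≤ ε) :
    μ {x | ∀ᶠ n in atTop, x ∈ s n} ≤ ε := by
  have hmono : Monotone fun N => ⋂ n ≥ N, s n := fun M N hMN =>
    biInter_mono (fun n hn => hMN.trans hn) fun _ _ => Subset.rfl
  calc μ {x | ∀ᶠ n in atTop, x ∈ s n} = μ (⋃ N, ⋂ n ≥ N, s n) := by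
        congr 1; ext x; simp [eventually_atTop]
    _ = ⨆ N, μ (⋂ n ≥ N, s n) := hmono.measure_iUnion
    _ ≤ ε := iSup_le fun N => (measure_mono (biInter_subset_of_mem le_rfl)).trans (hs N)

lemma ae_exists_isCompact_frequently_mem {Ω S : Type*} [MeasurableSpace Ω] [TopologicalSpace S]
    [MeasurableSpace S] {P : Measure Ω} {μ : ℕ → Measure S} (hμ : IsTightMeasureSet (range μ))
    {X : ℕ → Ω → S} (hX : ∀ n, MeasurePreserving (X n) P (μ n)) :
    ∀ᵐ ω ∂P, ∃ K, IsCompact K ∧ ∃ᶠ n in atTop, X n ω ∈ K := by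
  refine le_antisymm (le_of_forall_pos_le_add fun ε hε => ?_) zero_le
  rw [zero_add]
  obtain ⟨K, hK, hKε⟩ := isTightMeasureSet_iff_exists_isCompact_measure_compl_le.1 hμ ε hε
  have hescape (n : ℕ) : P (X n ⁻¹' Kᶜ) ≤ ε := calc
    P (X n ⁻¹' Kᶜ) ≤ P.map (X n) Kᶜ := Measure.le_map_apply (hX n).measurable.aemeasurable _
    _ = μ n Kᶜ := by rw [(hX n).map_eq]
    _ ≤ ε := hKε _ (mem_range_self n)
  refine (measure_mono fun ω hω => ?_).trans (measure_setOf_eventually_mem_le hescape)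
  simpa [not_frequently] using fun h => hω ⟨K, hK, h⟩

theorem exists_measurePreserving_ae_tendsto_of_isTightMeasureSet {S : Type*} [TopologicalSpace S]
    [PolishSpace S] [MeasurableSpace S] [BorelSpace S] (μ : ℕ → Measure S)
    [∀ n, IsProbabilityMeasure (μ n)] (hμ : IsTightMeasureSet (range μ)) :
    ∃ φ : ℕ → ℕ, StrictMono φ ∧ ∃ X : ℕ → I → S,
      (∀ n, MeasurePreserving (X n) volume (μ (φ n))) ∧
      ∀ᵐ u, ∃ x, Tendsto (fun n => X n u) atTop (𝓝 x) := by
  let := TopologicalSpace.upgradeIsCompletelyMetrizable S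
  obtain ⟨F, hF⟩ := Metric.PiNatEmbed.exists_embedding_to_hilbert_cube (X := S)
  have hFm : MeasurableEmbedding F := hF.continuous.measurableEmbedding hF.injective
  have hprob (n : ℕ) : IsProbabilityMeasure ((μ n).map F) :=
    Measure.isProbabilityMeasure_map hFm.measurable.aemeasurable
  obtain ⟨φ, hφ, Y, hY, hYlim⟩ :=
    exists_measurePreserving_ae_tendsto_hilbertCube fun n => (μ n).map F
  have : Nonempty S := (μ 0).nonempty_of_neZero
  have hdecode (n : ℕ) : MeasurePreserving hFm.invFun ((μ n).map F) (μ n) :=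
    ⟨hFm.measurable_invFun, by rw [Measure.map_map hFm.measurable_invFun hFm.measurable,
      hFm.leftInverse_invFun.id, Measure.map_id]⟩
  have hX (n : ℕ) : MeasurePreserving (hFm.invFun ∘ Y n) volume (μ (φ n)) :=
    (hdecode _).comp (hY n)
  have hFX : ∀ᵐ u, ∀ n, F (hFm.invFun (Y n u)) = Y n u := by
    refine ae_all_iff.2 fun n => ?_
    filter_upwards [(hY n).quasiMeasurePreserving.ae (ae_map_mem_range F hFm.measurableSet_range _)]
      with u ⟨x, hx⟩
    rw [← hx, hFm.leftInverse_invFun x]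
  refine ⟨φ, hφ, fun n => hFm.invFun ∘ Y n, hX, ?_⟩
  filter_upwards [hYlim, hFX, ae_exists_isCompact_frequently_mem
    (hμ.subset (range_comp_subset_range φ μ)) hX] with u ⟨y, hy⟩ hFu ⟨K, hK, hKu⟩
  have hFy : Tendsto (fun n => F (hFm.invFun (Y n u))) atTop (𝓝 y) := by simpa only [hFu] using hy
  obtain ⟨x, -, rfl⟩ : y ∈ F '' K := (hK.image hF.continuous).isClosed.mem_of_frequently_of_tendsto
    (hKu.mono fun n hn => mem_image_of_mem F hn) hFy
  exact ⟨x, hF.tendsto_nhds_iff.2 hFy⟩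

lemma isTightMeasureSet_pi {ι : Type*} [Countable ι] {S : ι → Type*} [∀ i, TopologicalSpace (S i)]
    [∀ i, MeasurableSpace (S i)] {M : Set (Measure (∀ i, S i))}
    (hM : ∀ i, IsTightMeasureSet ((fun μ => μ.map (fun x => x i)) '' M)) : IsTightMeasureSet M := by
  refine isTightMeasureSet_iff_exists_isCompact_measure_compl_le.2 fun ε hε => ?_
  obtain ⟨δ, hδ, hδε⟩ := ENNReal.exists_pos_sum_of_countable hε.ne' ι
  choose K hK hKδ using fun i =>
    isTightMeasureSet_iff_exists_isCompact_measure_compl_le.1 (hM i) (δ i)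
      (ENNReal.coe_pos.2 (hδ i))
  refine ⟨univ.pi K, isCompact_univ_pi hK, fun μ hμ => ?_⟩
  calc μ (univ.pi K)ᶜ ≤ μ (⋃ i, (fun x => x i) ⁻¹' (K i)ᶜ) :=
        measure_mono fun x hx => by simpa [mem_univ_pi] using hx
    _ ≤ ∑' i, μ ((fun x => x i) ⁻¹' (K i)ᶜ) := measure_iUnion_le _
    _ ≤ ∑' i, (δ i : ℝ≥0∞) := ENNReal.tsum_le_tsum fun i =>
        (Measure.le_map_apply (measurable_pi_apply i).aemeasurable _).trans
          (hKδ i _ (mem_image_of_mem _ hμ))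
    _ ≤ ε := hδε.le

lemma isTightMeasureSet_range_map_of_measureReal_norm_gt {ι E : Type*} [SeminormedAddCommGroup E]
    [ProperSpace E] [MeasurableSpace E] [OpensMeasurableSpace E] {Ω : ι → Type*}
    [∀ i, MeasurableSpace (Ω i)] {P : ∀ i, Measure (Ω i)} [∀ i, IsFiniteMeasure (P i)]
    {X : ∀ i, Ω i → E} (hX : ∀ i, Measurable (X i))
    (h : ∀ ε > (0 : ℝ), ∃ c : ℝ, ∀ i, (P i).real {ω | c < ‖X i ω‖} < ε) :
    IsTightMeasureSet (range fun i => (P i).map (X i)) := by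
  refine isTightMeasureSet_iff_exists_isCompact_measure_compl_le.2 fun ε hε => ?_
  obtain ⟨δ, hδ, hδε⟩ := ENNReal.lt_iff_exists_nnreal_btwn.1 hε
  obtain ⟨c, hc⟩ := h δ (ENNReal.coe_pos.1 hδ)
  refine ⟨Metric.closedBall 0 c, isCompact_closedBall 0 c, forall_mem_range.2 fun i => ?_⟩
  have hpre : X i ⁻¹' (Metric.closedBall 0 c)ᶜ = {ω | c < ‖X i ω‖} := by ext; simp
  rw [Measure.map_apply (hX i) Metric.isClosed_closedBall.measurableSet.compl, hpre,
    ← ofReal_measureReal]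
  exact (ENNReal.ofReal_le_ofReal (hc i).le).trans (by simpa using hδε.le)

lemma tendsto_measureReal_lt_norm_sub {ι Ω E : Type*} [SeminormedAddCommGroup E]
    [MeasurableSpace Ω] {μ : Measure Ω} [IsFiniteMeasure μ] {f : ι → Ω → E} {g : Ω → E}
    {l : Filter ι} (h : TendstoInMeasure μ f l g) {ε : ℝ} (hε : 0 < ε) :
    Tendsto (fun i => μ.real {x | ε < ‖f i x - g x‖}) l (𝓝 0) :=
  squeeze_zero (fun _ => measureReal_nonneg)
    (fun _ => measureReal_mono fun x (hx : ε < ‖f _ x - g x‖) => hx.le)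
    (tendstoInMeasure_iff_measureReal_norm.1 h ε hε)

section CauchyInMeasure

variable {Ω E ι : Type*} [MeasurableSpace Ω] {μ : Measure Ω}

lemma measure_add_le_edist_le [PseudoEMetricSpace E] (f g h : Ω → E) (a b : ℝ≥0∞) :
    μ {x | a + b ≤ edist (f x) (h x)} ≤
      μ {x | a ≤ edist (f x) (g x)} + μ {x | b ≤ edist (g x) (h x)} := by
  refine (measure_mono fun x (hx : a + b ≤ _) => ?_).trans (measure_union_le _ _)
  by_contra hlt
  obtain ⟨hfg, hgh⟩ : edist (f x) (g x) < a ∧ edist (g x) (h x) < b := by simpa using hlt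
  exact (hx.trans (edist_triangle _ _ _)).not_gt (ENNReal.add_lt_add hfg hgh)

lemma tendsto_measure_le_edist_trans [PseudoEMetricSpace E] {f g h : ι → Ω → E} {l : Filter ι}
    (hfg : ∀ ε, 0 < ε → Tendsto (fun i => μ {x | ε ≤ edist (f i x) (g i x)}) l (𝓝 0))
    (hgh : ∀ ε, 0 < ε → Tendsto (fun i => μ {x | ε ≤ edist (g i x) (h i x)}) l (𝓝 0))
    (ε : ℝ≥0∞) (hε : 0 < ε) :
    Tendsto (fun i => μ {x | ε ≤ edist (f i x) (h i x)}) l (𝓝 0) := by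
  have hsum := (hfg _ (ENNReal.half_pos hε.ne')).add (hgh _ (ENNReal.half_pos hε.ne'))
  rw [add_zero] at hsum
  refine tendsto_of_tendsto_of_tendsto_of_le_of_le tendsto_const_nhds hsum (fun _ => zero_le)
    fun i => ?_
  simpa only [ENNReal.add_halves] using measure_add_le_edist_le (f i) (g i) (h i) (ε / 2) (ε / 2)

/-- A family of functions is Cauchy in measure along `l` if, for each `ε > 0`, the measure of the
set where two of its members are at distance at least `ε` tends to `0` along `l ×ˢ l`. This is the
intrinsic counterpart of `TendstoInMeasure`. -/
def CauchyInMeasure [EDist E] (μ : Measure Ω) (f : ι → Ω → E) (l : Filter ι) : Prop :=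
  ∀ ε, 0 < ε → Tendsto (fun p : ι × ι => μ {x | ε ≤ edist (f p.1 x) (f p.2 x)}) (l ×ˢ l) (𝓝 0)

namespace CauchyInMeasure

lemma of_tendstoInMeasure [PseudoEMetricSpace E] {f : ι → Ω → E} {l : Filter ι} {g : Ω → E}
    (h : TendstoInMeasure μ f l g) : CauchyInMeasure μ f l :=
  tendsto_measure_le_edist_trans (g := fun _ => g) (fun ε hε => (h ε hε).comp tendsto_fst)
    fun ε hε => by simpa only [edist_comm (g _), Function.comp_def] using (h ε hε).comp tendsto_snd

variable [PseudoEMetricSpace E] {f : ℕ → Ω → E}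

lemma of_ae_exists_tendsto [IsFiniteMeasure μ] (hmeas : ∀ n, AEStronglyMeasurable (f n) μ)
    (hlim : ∀ᵐ x ∂μ, ∃ y, Tendsto (fun n => f n x) atTop (𝓝 y)) : CauchyInMeasure μ f atTop := by
  obtain ⟨g, -, hg⟩ := exists_stronglyMeasurable_limit_of_tendsto_ae hmeas hlim
  exact .of_tendstoInMeasure (tendstoInMeasure_of_tendsto_ae hmeas hg)

variable [CompleteSpace E]

lemma exists_strictMono_ae_tendsto (hf : CauchyInMeasure μ f atTop) :
    ∃ ψ : ℕ → ℕ, StrictMono ψ ∧ ∀ᵐ x ∂μ, ∃ y, Tendsto (fun k => f (ψ k) x) atTop (𝓝 y) := by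
  have hfast (k : ℕ) : ∀ᶠ m in atTop, ∀ n ≥ m,
      μ {x | 2⁻¹ ^ k ≤ edist (f m x) (f n x)} ≤ 2⁻¹ ^ k := by
    have hpos : (0 : ℝ≥0∞) < 2⁻¹ ^ k := ENNReal.pow_pos (by simp) k
    have hev := ENNReal.tendsto_nhds_zero.1 (hf _ hpos) _ hpos
    rw [prod_atTop_atTop_eq, eventually_atTop_prod_self] at hev
    obtain ⟨N, hN⟩ := hev
    filter_upwards [eventually_ge_atTop N] with m hm n hmn using hN m n hm (hm.trans hmn)
  obtain ⟨ψ, hψ, hψfast⟩ := extraction_forall_of_eventually hfast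
  have hsum : ∑' k, μ {x | 2⁻¹ ^ k ≤ edist (f (ψ k) x) (f (ψ (k + 1)) x)} ≠ ∞ := by
    refine ne_top_of_le_ne_top ?_ <|
      ENNReal.tsum_le_tsum fun k => hψfast k _ (hψ.monotone k.le_succ)
    simp [ENNReal.tsum_geometric]
  refine ⟨ψ, hψ, ?_⟩
  filter_upwards [ae_eventually_notMem hsum] with x hx
  obtain ⟨N, hN⟩ := eventually_atTop.1 hx
  have hstep (k : ℕ) : edist (f (ψ (k + N)) x) (f (ψ (k + 1 + N)) x) ≤ 1 * 2⁻¹ ^ k := by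
    rw [one_mul, add_right_comm]
    exact (not_le.1 (hN (k + N) (Nat.le_add_left N k))).le.trans
      (pow_le_pow_right_of_le_one' (by simp) (Nat.le_add_right k N))
  have hcauchy : CauchySeq fun k => f (ψ (k + N)) x :=
    cauchySeq_of_edist_le_geometric 2⁻¹ 1 (by simp) ENNReal.one_ne_top hstep
  obtain ⟨y, hy⟩ := cauchySeq_tendsto_of_complete hcauchy
  exact ⟨y, (tendsto_add_atTop_iff_nat N).1 hy⟩

theorem exists_tendstoInMeasure [IsFiniteMeasure μ] (hf : CauchyInMeasure μ f atTop)
    (hmeas : ∀ n, AEStronglyMeasurable (f n) μ) : ∃ g, TendstoInMeasure μ f atTop g := by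
  obtain ⟨ψ, hψ, hlim⟩ := hf.exists_strictMono_ae_tendsto
  obtain ⟨g, -, hg⟩ := exists_stronglyMeasurable_limit_of_tendsto_ae (fun k => hmeas (ψ k)) hlim
  exact ⟨g, tendsto_measure_le_edist_trans (g := fun n => f (ψ n))
    (fun ε hε => (hf ε hε).comp (tendsto_id.prodMk hψ.tendsto_atTop))
    (tendstoInMeasure_of_tendsto_ae (fun k => hmeas (ψ k)) hg)⟩

end CauchyInMeasure

end CauchyInMeasure

section EquicontinuousInMeasureAt

variable {ι T E : Type*} [TopologicalSpace T]

/-- A family of processes, possibly living on different measure spaces, is equicontinuous in measure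
at the time `t` if `P i {ω | ε ≤ edist (X i s ω) (X i t ω)}` tends to `0` as `s → t`, uniformly
in `i`. -/
def EquicontinuousInMeasureAt [EDist E] {Ω : ι → Type*} [∀ i, MeasurableSpace (Ω i)]
    (P : ∀ i, Measure (Ω i)) (X : ∀ i, T → Ω i → E) (t : T) : Prop :=
  ∀ ε, 0 < ε → Tendsto (fun s => ⨆ i, P i {ω | ε ≤ edist (X i s ω) (X i t ω)}) (𝓝 t) (𝓝 0)

namespace EquicontinuousInMeasureAt

variable {Ω : ι → Type*} [∀ i, MeasurableSpace (Ω i)] {P : ∀ i, Measure (Ω i)}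
  {X : ∀ i, T → Ω i → E} {t : T}

lemma tendstoInMeasure [EDist E] (h : EquicontinuousInMeasureAt P X t) (i : ι) :
    TendstoInMeasure (P i) (X i) (𝓝 t) (X i t) := fun ε hε =>
  tendsto_of_tendsto_of_tendsto_of_le_of_le tendsto_const_nhds (h ε hε) (fun _ => zero_le)
    fun s => le_iSup (fun i => P i {ω | ε ≤ edist (X i s ω) (X i t ω)}) i

lemma of_identDistrib [PseudoEMetricSpace E] [SecondCountableTopology E] [MeasurableSpace E]
    [OpensMeasurableSpace E] {κ : Type*} {Ω' : κ → Type*} [∀ j, MeasurableSpace (Ω' j)]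
    {P' : ∀ j, Measure (Ω' j)} {X' : ∀ j, T → Ω' j → E} {φ : κ → ι}
    (h : EquicontinuousInMeasureAt P X t)
    (hident : ∀ j, IdentDistrib (fun ω s => X (φ j) s ω) (fun ω s => X' j s ω)
      (P (φ j)) (P' j)) : EquicontinuousInMeasureAt P' X' t := by
  intro ε hε
  refine tendsto_of_tendsto_of_tendsto_of_le_of_le tendsto_const_nhds (h ε hε)
    (fun _ => zero_le) fun s => iSup_le fun j => ?_
  have hfar : MeasurableSet {x : T → E | ε ≤ edist (x s) (x t)} :=
    measurableSet_le measurable_const ((measurable_pi_apply s).edist (measurable_pi_apply t))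
  calc P' j {ω | ε ≤ edist (X' j s ω) (X' j t ω)}
      = P (φ j) {ω | ε ≤ edist (X (φ j) s ω) (X (φ j) t ω)} :=
        ((hident j).measure_mem_eq hfar).symm
    _ ≤ ⨆ i, P i {ω | ε ≤ edist (X i s ω) (X i t ω)} :=
        le_iSup (fun i => P i {ω | ε ≤ edist (X i s ω) (X i t ω)}) (φ j)

lemma cauchyInMeasure_of_dense [PseudoEMetricSpace E] {Ω₀ : Type*} [MeasurableSpace Ω₀]
    {μ : Measure Ω₀} {Y : ι → T → Ω₀ → E} {l : Filter ι}
    (h : EquicontinuousInMeasureAt (fun _ => μ) Y t) {D : Set T} (hD : Dense D)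
    (hY : ∀ s ∈ D, CauchyInMeasure μ (fun i => Y i s) l) :
    CauchyInMeasure μ (fun i => Y i t) l := by
  intro ε hε
  have hε3 : 0 < ε / 3 := ENNReal.div_pos hε.ne' (by simp)
  refine ENNReal.tendsto_nhds_zero.2 fun δ hδ => ?_
  have hδ3 : 0 < δ / 3 := ENNReal.div_pos hδ.ne' (by simp)
  obtain ⟨s, hs, hsD⟩ := ((mem_closure_iff_frequently.1 (hD t)).and_eventually
    (ENNReal.tendsto_nhds_zero.1 (h _ hε3) _ hδ3)).exists
  have hst (i : ι) : μ {ω | ε / 3 ≤ edist (Y i s ω) (Y i t ω)} ≤ δ / 3 :=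
    (le_iSup (fun i => μ {ω | ε / 3 ≤ edist (Y i s ω) (Y i t ω)}) i).trans hsD
  filter_upwards [ENNReal.tendsto_nhds_zero.1 (hY s hs _ hε3) _ hδ3] with p hp
  calc μ {ω | ε ≤ edist (Y p.1 t ω) (Y p.2 t ω)}
      = μ {ω | ε / 3 + (ε / 3 + ε / 3) ≤ edist (Y p.1 t ω) (Y p.2 t ω)} := by
        rw [← add_assoc, ENNReal.add_thirds]
    _ ≤ μ {ω | ε / 3 ≤ edist (Y p.1 t ω) (Y p.1 s ω)} +
        (μ {ω | ε / 3 ≤ edist (Y p.1 s ω) (Y p.2 s ω)} +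
          μ {ω | ε / 3 ≤ edist (Y p.2 s ω) (Y p.2 t ω)}) :=
        (measure_add_le_edist_le _ (Y p.1 s) _ _ _).trans
          (add_le_add_right (measure_add_le_edist_le _ (Y p.2 s) _ _ _) _)
    _ ≤ δ / 3 + (δ / 3 + δ / 3) := by
        gcongr
        · simpa only [edist_comm (Y p.1 t _)] using hst p.1
        · exact hst p.2
    _ = δ := by rw [← add_assoc, ENNReal.add_thirds]

lemma of_measureReal_lt_dist [PseudoMetricSpace E] [∀ i, IsFiniteMeasure (P i)]
    (h : ∀ ε > (0 : ℝ), ∀ δ > (0 : ℝ), ∀ᶠ s in 𝓝 t, ∀ i,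
      (P i).real {ω | ε < dist (X i s ω) (X i t ω)} < δ) :
    EquicontinuousInMeasureAt P X t := by
  intro ε hε
  obtain ⟨r, hr, hrε⟩ := ENNReal.lt_iff_exists_nnreal_btwn.1 hε
  refine ENNReal.tendsto_nhds_zero.2 fun δ hδ => ?_
  obtain ⟨q, hq, hqδ⟩ := ENNReal.lt_iff_exists_nnreal_btwn.1 hδ
  filter_upwards [h r (ENNReal.coe_pos.1 hr) q (ENNReal.coe_pos.1 hq)] with s hs
  refine iSup_le fun i => ?_
  calc P i {ω | ε ≤ edist (X i s ω) (X i t ω)}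
      ≤ P i {ω | r < dist (X i s ω) (X i t ω)} := measure_mono fun ω hω => by
        have hlt := hrε.trans_le hω
        rwa [edist_nndist, ENNReal.coe_lt_coe] at hlt
    _ = ENNReal.ofReal ((P i).real {ω | r < dist (X i s ω) (X i t ω)}) := by rw [ofReal_measureReal]
    _ ≤ ENNReal.ofReal q := ENNReal.ofReal_le_ofReal (hs i).le
    _ ≤ δ := by simpa using hqδ.le

end EquicontinuousInMeasureAt

end EquicontinuousInMeasureAt

section Modification

variable {T E Ω : Type*} [TopologicalSpace T] [FirstCountableTopology T] [MetricSpace E]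
  [CompleteSpace E] [SecondCountableTopology E] [MeasurableSpace E] [BorelSpace E]
  [MeasurableSpace Ω] {P : Measure Ω} {D : Set T} {η : T → Ω → E}

lemma exists_measurable_ae_eq_comp_restrict [Nonempty E] (hD : Dense D) {t : T}
    (ht : TendstoInMeasure P η (𝓝 t) (η t)) :
    ∃ F : (D → E) → E, Measurable F ∧ η t =ᵐ[P] fun ω => F fun s => η s ω := by
  have : (comap ((↑) : D → T) (𝓝 t)).NeBot := mem_closure_iff_comap_neBot.1 (hD t)
  have htD : TendstoInMeasure P (fun s : D => η s) (comap (↑) (𝓝 t)) (η t) := ht.comp tendsto_comap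
  obtain ⟨u, -, hu⟩ := htD.exists_seq_tendsto_ae'
  refine ⟨fun x => limUnder atTop fun n => x (u n), ?_, ?_⟩
  · exact (StronglyMeasurable.limUnder fun n =>
      (measurable_pi_apply (u n)).stronglyMeasurable).measurable
  · filter_upwards [hu] with ω hω using hω.limUnder_eq.symm

theorem exists_identDistrib_extension [IsProbabilityMeasure P] (hD : Dense D)
    (hη : ∀ t, Measurable (η t)) (hcont : ∀ t, TendstoInMeasure P η (𝓝 t) (η t))
    {Ω' : Type*} [MeasurableSpace Ω'] {P' : Measure Ω'} {X : Ω' → D → E}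
    (hX : MeasurePreserving X P' (P.map fun ω (s : D) => η s ω)) :
    ∃ Y : T → Ω' → E, IdentDistrib (fun ω t => η t ω) (fun ω t => Y t ω) P P' ∧
      ∀ s : D, Y s =ᵐ[P'] fun ω => X ω s := by
  have : Nonempty Ω := P.nonempty_of_neZero
  choose F hF hηF using fun t =>
    have : Nonempty E := ‹Nonempty Ω›.map (η t)
    exists_measurable_ae_eq_comp_restrict hD (hcont t)
  have hres : Measurable fun ω (s : D) => η s ω := measurable_pi_lambda _ fun s => hη s
  have hΦ : Measurable fun x t => F t x := measurable_pi_lambda _ hF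
  refine ⟨fun t ω => F t (X ω), ⟨(measurable_pi_lambda _ hη).aemeasurable,
    (hΦ.comp hX.measurable).aemeasurable, ?_⟩, fun s => ?_⟩
  · calc P.map (fun ω t => η t ω)
        = P.map ((fun x t => F t x) ∘ fun ω s => η s ω) :=
          map_eq_of_forall_ae_eq (measurable_pi_lambda _ hη).aemeasurable
            (hΦ.comp hres).aemeasurable hηF
      _ = (P'.map X).map (fun x t => F t x) := by rw [hX.map_eq, Measure.map_map hΦ hres]
      _ = P'.map (fun ω t => F t (X ω)) := Measure.map_map hΦ hX.measurable
  · have hFs : ∀ᵐ x ∂P.map (fun ω (s : D) => η s ω), F s x = x s :=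
      (ae_map_iff hres.aemeasurable
        (measurableSet_eq_fun (hF s) (measurable_pi_apply s))).2 (hηF s).symm
    exact hX.quasiMeasurePreserving.ae hFs

end Modification

theorem stmt_2_general {T E : Type*} [TopologicalSpace T] [FirstCountableTopology T]
    [TopologicalSpace.SeparableSpace T] [MetricSpace E] [CompleteSpace E]
    [SecondCountableTopology E] [MeasurableSpace E] [BorelSpace E] {Ω : ℕ → Type*}
    [∀ n, MeasurableSpace (Ω n)] (P : ∀ n, Measure (Ω n)) [∀ n, IsProbabilityMeasure (P n)]
    (ξ : ∀ n, T → Ω n → E) (hmeas : ∀ n t, Measurable (ξ n t))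
    (htight : ∀ t, IsTightMeasureSet (range fun n => (P n).map (ξ n t)))
    (hcont : ∀ t, EquicontinuousInMeasureAt P ξ t) :
    ∃ φ : ℕ → ℕ, StrictMono φ ∧ ∃ (ξ' : ℕ → T → I → E) (ξlim : T → I → E),
      (∀ n, IdentDistrib (fun ω t => ξ (φ n) t ω) (fun u t => ξ' n t u) (P (φ n)) volume) ∧
      ∀ t, TendstoInMeasure volume (fun n => ξ' n t) atTop (ξlim t) := by
  obtain ⟨D, hDc, hD⟩ := TopologicalSpace.exists_countable_dense T
  have := hDc.to_subtype
  have hres (n : ℕ) : Measurable fun ω (s : D) => ξ n s ω :=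
    measurable_pi_lambda _ fun s => hmeas n s
  let μ (n : ℕ) : Measure (D → E) := (P n).map fun ω (s : D) => ξ n s ω
  have hμ (n : ℕ) : IsProbabilityMeasure (μ n) :=
    Measure.isProbabilityMeasure_map (hres n).aemeasurable
  have hμtight : IsTightMeasureSet (range μ) := isTightMeasureSet_pi fun s => by
    have hmarginal (n : ℕ) : (μ n).map (fun x => x s) = (P n).map (ξ n s) :=
      Measure.map_map (measurable_pi_apply s) (hres n)
    simpa only [← range_comp, Function.comp_def, hmarginal] using htight s
  obtain ⟨φ, hφ, X, hX, hXlim⟩ :=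
    exists_measurePreserving_ae_tendsto_of_isTightMeasureSet μ hμtight
  choose ξ' hident hξ'X using fun n =>
    exists_identDistrib_extension hD (hmeas _) (fun t => (hcont t).tendstoInMeasure _) (hX n)
  have hξ'meas (t : T) (n : ℕ) : AEStronglyMeasurable (ξ' n t) :=
    ((measurable_pi_apply t).comp_aemeasurable (hident n).aemeasurable_snd).aestronglyMeasurable
  have hcauchyD : ∀ s ∈ D, CauchyInMeasure volume (fun n => ξ' n s) atTop := by
    refine fun s hs => .of_ae_exists_tendsto (hξ'meas s) ?_
    filter_upwards [hXlim, ae_all_iff.2 fun n => hξ'X n ⟨s, hs⟩] with u ⟨x, hx⟩ hu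
    exact ⟨x ⟨s, hs⟩, by simpa only [hu] using tendsto_pi_nhds.1 hx ⟨s, hs⟩⟩
  have hcauchy (t : T) : CauchyInMeasure volume (fun n => ξ' n t) atTop :=
    ((hcont t).of_identDistrib hident).cauchyInMeasure_of_dense hD hcauchyD
  choose ξlim hξlim using fun t => (hcauchy t).exists_tendstoInMeasure (hξ'meas t)
  exact ⟨φ, hφ, ξ', ξlim, hident, hξlim⟩

/-- Skorokhod's lemma on a unique probability space and convergence in probability:
given `ℝ^d`-valued processes `ξ^n` on `[0,∞)` on a common probability space that are
uniformly bounded in probability and uniformly stochastically continuous (uniformly in `n`),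
there exist a subsequence `n'`, a new probability space, and processes `ξ̃^{n'}`, `ξ̃` on it
such that the finite-dimensional distributions of `ξ̃^{n'}` coincide with those of `ξ^{n'}`,
and `ξ̃^{n'}_t → ξ̃_t` in probability for every `t ≥ 0`. -/
theorem stmt_2 {d : ℕ}
    {Ω : Type} [MeasurableSpace Ω] (P : Measure Ω) [IsProbabilityMeasure P]
    (ξ : ℕ → ℝ → Ω → EuclideanSpace ℝ (Fin d))
    (hmeas : ∀ n, ∀ t, 0 ≤ t → Measurable (ξ n t))
    (hbdd : ∀ T > (0:ℝ), ∀ ε > (0:ℝ), ∃ c : ℝ, ∀ n, ∀ t ∈ Set.Icc (0:ℝ) T,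
      (P {ω | c < ‖ξ n t ω‖}).toReal < ε)
    (hcont : ∀ T > (0:ℝ), ∀ ε > (0:ℝ), ∀ δ > (0:ℝ), ∃ h > (0:ℝ),
      ∀ n, ∀ s ∈ Set.Icc (0:ℝ) T, ∀ t ∈ Set.Icc (0:ℝ) T, |t - s| ≤ h →
      (P {ω | ε < ‖ξ n t ω - ξ n s ω‖}).toReal < δ) :
    ∃ (φ : ℕ → ℕ), StrictMono φ ∧
    ∃ (Ω' : Type) (_ : MeasurableSpace Ω') (P' : Measure Ω'),
      IsProbabilityMeasure P' ∧
      ∃ (ξ' : ℕ → ℝ → Ω' → EuclideanSpace ℝ (Fin d))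
        (ξlim : ℝ → Ω' → EuclideanSpace ℝ (Fin d)),
        (∀ n, ∀ k : ℕ, ∀ times : Fin k → ℝ, (∀ i, 0 ≤ times i) →
          P.map (fun ω => fun i : Fin k => ξ (φ n) (times i) ω)
            = P'.map (fun ω' => fun i : Fin k => ξ' n (times i) ω')) ∧
        (∀ ε > (0:ℝ), ∀ t : ℝ, 0 ≤ t →
          Tendsto (fun n => (P' {ω' | ε < ‖ξ' n t ω' - ξlim t ω'‖}).toReal)
            atTop (nhds 0)) := by
  have htight (t : ℝ≥0) : IsTightMeasureSet (range fun n => P.map (ξ n t)) :=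
    isTightMeasureSet_range_map_of_measureReal_norm_gt (hmeas · t t.2) fun ε hε =>
      (hbdd (t + 1) (by positivity) ε hε).imp fun _ hc n => hc n t ⟨t.2, by simp⟩
  have hequi (t : ℝ≥0) : EquicontinuousInMeasureAt (fun _ => P) (fun n (s : ℝ≥0) => ξ n s) t := by
    refine .of_measureReal_lt_dist fun ε hε δ hδ => ?_
    obtain ⟨h, hh, hclose⟩ := hcont (t + 1) (by positivity) ε hε δ hδ
    filter_upwards [Metric.ball_mem_nhds t (lt_min hh one_pos)] with s hs n
    have hst : |(s : ℝ) - t| < min h 1 := hs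
    simpa only [dist_eq_norm, measureReal_def] using hclose n t ⟨t.2, by simp⟩ s
      ⟨s.2, by linarith [le_abs_self ((s : ℝ) - t), min_le_right h 1]⟩
      (hst.le.trans (min_le_left h 1))
  obtain ⟨φ, hφ, ξ', ξlim, hident, hlim⟩ :=
    stmt_2_general (fun _ => P) (fun n (t : ℝ≥0) => ξ n t) (fun n t => hmeas n t t.2) htight hequi
  refine ⟨φ, hφ, I, inferInstance, volume, inferInstance, fun n t => ξ' n t.toNNReal,
    fun t => ξlim t.toNNReal, fun n k times htimes => ?_, fun ε hε t _ => ?_⟩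
  · lift times to Fin k → ℝ≥0 using htimes
    have hproj : Measurable fun (x : ℝ≥0 → EuclideanSpace ℝ (Fin d)) i => x (times i) := by fun_prop
    simpa only [Real.toNNReal_coe, Function.comp_def] using ((hident n).comp hproj).map_eq
  · exact tendsto_measureReal_lt_norm_sub (hlim t.toNNReal) hε
end

section
/- Let C > 0 and let v : [0,∞) → [0,2] be a nondecreasing function such that v(t)² ≤ exp(C ∫₀^t v(s)² ds) − 1 for all t ≥ 0. Then v(t) = 0 for all t ≥ 0. -/
/-!
The function `F(t) = ∫₀ᵗ v²` vanishes at `0` and satisfies `F' ≤ g(F)` almost everywhere, where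
`g(x) = exp (C x) - 1`. Since `g` vanishes at `0` and is Lipschitz on the compact range of `F` over
`[0, t]`, this is a linear differential inequality `F' ≤ K F`, and Grönwall forces `F = 0`.
-/

open MeasureTheory

open Set Topology

section Gronwall

variable {a b : ℝ}

theorem hasDerivWithinAt_Ici_integral_of_continuousOn {E : Type*} [NormedAddCommGroup E]
    [NormedSpace ℝ E] [CompleteSpace E] {f : ℝ → E} (hf : ContinuousOn f (Icc a b)) {x : ℝ}
    (hx : x ∈ Ico a b) :
    HasDerivWithinAt (fun t ↦ ∫ s in a..t, f s) (f x) (Ici x) x := by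
  have h_nhds : Icc a b ∈ 𝓝[>] x := Icc_mem_nhdsGT_of_mem hx
  have hint : IntervalIntegrable f volume a x :=
    (hf.mono (Icc_subset_Icc_right hx.2.le)).intervalIntegrable_of_Icc hx.1
  exact intervalIntegral.integral_hasDerivWithinAt_right hint
    ⟨Icc a b, h_nhds, hf.aestronglyMeasurable measurableSet_Icc⟩
    ((hf x (Ico_subset_Icc_self hx)).mono_of_mem_nhdsWithin h_nhds)

variable {f : ℝ → ℝ} {δ K : ℝ}

theorem le_mul_exp_of_continuousOn_of_le_add_mul_integral (hK : 0 ≤ K)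
    (hf : ContinuousOn f (Icc a b)) (h : ∀ t ∈ Icc a b, f t ≤ δ + K * ∫ s in a..t, f s) :
    ∀ t ∈ Icc a b, f t ≤ δ * Real.exp (K * (t - a)) := by
  intro t ht
  have hab : a ≤ b := ht.1.trans ht.2
  set F : ℝ → ℝ := fun t ↦ δ + K * ∫ s in a..t, f s
  have hF_cont : ContinuousOn F (Icc a b) :=
    (((intervalIntegral.continuousOn_primitive_interval'
      (hf.intervalIntegrable_of_Icc hab) left_mem_uIcc).const_mul K).const_add δ).mono
        Icc_subset_uIcc
  have hF_deriv : ∀ x ∈ Ico a b, HasDerivWithinAt F (K * f x) (Ici x) x := fun x hx ↦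
    ((hasDerivWithinAt_Ici_integral_of_continuousOn hf hx).const_mul K).const_add δ
  have hF_init : F a ≤ δ := by simp [F]
  have hF_bound : ∀ x ∈ Ico a b, K * f x ≤ K * F x + 0 := fun x hx ↦
    (mul_le_mul_of_nonneg_left (h x (Ico_subset_Icc_self hx)) hK).trans_eq (add_zero _).symm
  have hF_slope : ∀ x ∈ Ico a b, ∀ r, K * f x < r →
      ∃ᶠ z in 𝓝[>] x, (z - x)⁻¹ * (F z - F x) < r := fun x hx _ hr ↦
    (hF_deriv x hx).liminf_right_slope_le hr
  calc f t ≤ F t := h t ht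
    _ ≤ gronwallBound δ K 0 (t - a) :=
      le_gronwallBound_of_liminf_deriv_right_le hF_cont hF_slope hF_init hF_bound t ht
    _ = δ * Real.exp (K * (t - a)) := gronwallBound_ε0 δ K (t - a)

theorem le_mul_exp_of_le_add_mul_integral (hK : 0 ≤ K) (hf : IntervalIntegrable f volume a b)
    (h : ∀ t ∈ Icc a b, f t ≤ δ + K * ∫ s in a..t, f s) :
    ∀ t ∈ Icc a b, f t ≤ δ * Real.exp (K * (t - a)) := by
  intro t ht
  have hab : a ≤ b := ht.1.trans ht.2
  set F : ℝ → ℝ := fun t ↦ δ + K * ∫ s in a..t, f s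
  have hF_cont : ContinuousOn F (Icc a b) :=
    (((intervalIntegral.continuousOn_primitive_interval'
      hf left_mem_uIcc).const_mul K).const_add δ).mono Icc_subset_uIcc
  -- Since `f ≤ F`, the continuous function `F` inherits the integral inequality.
  have hF_le : ∀ x ∈ Icc a b, F x ≤ δ + K * ∫ s in a..x, F s := by
    intro x hx
    have hsub : Icc a x ⊆ Icc a b := Icc_subset_Icc_right hx.2
    have hf_int : IntervalIntegrable f volume a x :=
      hf.mono_set (by simpa only [uIcc_of_le hx.1, uIcc_of_le hab] using hsub)
    have hF_int : IntervalIntegrable F volume a x :=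
      (hF_cont.mono hsub).intervalIntegrable_of_Icc hx.1
    have h_int_le : ∫ s in a..x, f s ≤ ∫ s in a..x, F s :=
      intervalIntegral.integral_mono_on hx.1 hf_int hF_int fun s hs ↦ h s (hsub hs)
    exact add_le_add_right (mul_le_mul_of_nonneg_left h_int_le hK) δ
  exact (h t ht).trans (le_mul_exp_of_continuousOn_of_le_add_mul_integral hK hF_cont hF_le t ht)

theorem eq_zero_of_le_comp_integral {g : ℝ → ℝ} (hg : LocallyLipschitzOn (Ici 0) g)
    (hg_zero : g 0 = 0) (hf : IntervalIntegrable f volume a b)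
    (hf_nonneg : ∀ t ∈ Icc a b, 0 ≤ f t) (h : ∀ t ∈ Icc a b, f t ≤ g (∫ s in a..t, f s)) :
    ∀ t ∈ Icc a b, f t = 0 := by
  intro t ht
  have hab : a ≤ b := ht.1.trans ht.2
  set F : ℝ → ℝ := fun t ↦ ∫ s in a..t, f s
  have hF_nonneg : ∀ x ∈ Icc a b, 0 ≤ F x := fun x hx ↦
    intervalIntegral.integral_nonneg hx.1 fun s hs ↦ hf_nonneg s ⟨hs.1, hs.2.trans hx.2⟩
  have hF_cont : ContinuousOn F (Icc a b) :=
    (intervalIntegral.continuousOn_primitive_interval' hf left_mem_uIcc).mono Icc_subset_uIcc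
  have hF_zero : (0 : ℝ) ∈ F '' Icc a b :=
    ⟨a, left_mem_Icc.2 hab, intervalIntegral.integral_same⟩
  obtain ⟨K, hK⟩ : ∃ K, LipschitzOnWith K g (F '' Icc a b) :=
    (hg.mono (image_subset_iff.2 hF_nonneg)).exists_lipschitzOnWith_of_compact
      (isCompact_Icc.image_of_continuousOn hF_cont)
  have h_linear : ∀ x ∈ Icc a b, f x ≤ 0 + K * F x := fun x hx ↦
    calc f x ≤ g (F x) := h x hx
      _ ≤ dist (g (F x)) (g 0) := by
        rw [hg_zero, Real.dist_0_eq_abs]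
        exact le_abs_self _
      _ ≤ K * dist (F x) 0 := hK.dist_le_mul _ (mem_image_of_mem F hx) _ hF_zero
      _ = 0 + K * F x := by rw [Real.dist_0_eq_abs, abs_of_nonneg (hF_nonneg x hx), zero_add]
  have h_nonpos : f t ≤ 0 := by
    simpa only [zero_mul] using le_mul_exp_of_le_add_mul_integral K.coe_nonneg hf h_linear t ht
  exact h_nonpos.antisymm (hf_nonneg t ht)

end Gronwall

theorem stmt_8_general (C : ℝ) (v : ℝ → ℝ)
    (h_int : ∀ t, 0 ≤ t → IntervalIntegrable (fun s ↦ (v s) ^ 2) volume 0 t)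
    (h_ineq : ∀ t, 0 ≤ t →
      (v t) ^ 2 ≤ Real.exp (C * ∫ s in (0 : ℝ)..t, (v s) ^ 2) - 1) :
    ∀ t, 0 ≤ t → v t = 0 := by
  intro t ht
  have hg : LocallyLipschitz fun x ↦ Real.exp (C * x) - 1 :=
    ContDiff.locallyLipschitz (𝕂 := ℝ) (by fun_prop)
  have h_sq : (v t) ^ 2 = 0 :=
    eq_zero_of_le_comp_integral hg.locallyLipschitzOn (by simp) (h_int t ht)
      (fun s _ ↦ sq_nonneg (v s)) (fun s hs ↦ h_ineq s hs.1) t (right_mem_Icc.2 ht)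
  exact pow_eq_zero_iff two_ne_zero |>.1 h_sq

/-- If `v : [0,∞) → [0,2]` is nondecreasing and satisfies
`v(t)² ≤ exp(C ∫₀ᵗ v(s)² ds) − 1` for all `t ≥ 0`, where `C > 0`, then `v ≡ 0` on `[0,∞)`. -/
theorem stmt_8 (C : ℝ) (hC : 0 < C) (v : ℝ → ℝ)
    (h_range : ∀ t, 0 ≤ t → v t ∈ Set.Icc (0:ℝ) 2)
    (h_mono : MonotoneOn v (Set.Ici (0:ℝ)))
    (h_ineq : ∀ t, 0 ≤ t →
      (v t) ^ 2 ≤ Real.exp (C * ∫ s in (0:ℝ)..t, (v s) ^ 2) - 1) :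
    ∀ t, 0 ≤ t → v t = 0 := by
  have h_sq_mono : MonotoneOn (fun s ↦ (v s) ^ 2) (Ici 0) :=
    pow_left_monotoneOn.comp h_mono fun s hs ↦ (h_range s hs).1
  exact stmt_8_general C v (fun t ht ↦
    (h_sq_mono.mono (uIcc_of_le ht ▸ Icc_subset_Ici_self)).intervalIntegrable) h_ineq
end
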